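/- Let ε and b satisfy 0 < ε ≤ 1 and 0 < b ≤ a/2, and let u = (0, 0, aε) and c = (0, bε, 0). Then d_g(u, c) < ε; that is, the circumradius of the constructed configuration is smaller than the sampling parameter ε. (This uses f(0) ≤ 3/4, a² = 1/2, and b² ≤ 1/8.) -/

import Mathlib

open Real MeasureTheory

noncomputable section

/-- `ℝ³` with the Euclidean norm. -/
abbrev E3 : Type := EuclideanSpace ℝ (Fin 3)

/-- The bump function `f(y) = A (1 + cos (π y))`. -/
def f (A y : ℝ) : ℝ := A * (1 + Real.cos (Real.pi * y))

/-- The g-length of a path `γ` in the perturbed metric: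
`L_g(γ) = ∫₀¹ √(γ₁′(t)² + γ₂′(t)² + (1 + f(γ₂(t))) γ₃′(t)²) dt`. -/
def Lg (A : ℝ) (γ : ℝ → E3) : ℝ :=
  ∫ t in (0:ℝ)..1,
    Real.sqrt ((deriv γ t 0) ^ 2 + (deriv γ t 1) ^ 2
      + (1 + f A (γ t 1)) * (deriv γ t 2) ^ 2)

/-- The geodesic distance: the infimum of g-lengths of C¹ paths from `p` to `q`. -/
def dg (A : ℝ) (p q : E3) : ℝ :=
  sInf {L : ℝ | ∃ γ : ℝ → E3,
    ContDiff ℝ 1 γ ∧ γ 0 = p ∧ γ 1 = q ∧ L = Lg A γ}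

/-- A point of `ℝ³` from its three coordinates. -/
def pt (x y z : ℝ) : E3 := (EuclideanSpace.equiv (Fin 3) ℝ).symm ![x, y, z]

/-- `a = 1/√2`. -/
def a : ℝ := 1 / Real.sqrt 2

/-- `ξ₀ = √(1 + f(0)) − 1`. -/
def ξ₀ (A : ℝ) : ℝ := Real.sqrt (1 + f A 0) - 1

/-!
The straight segment from `u` to `c` is already short enough. Since `f ≤ f(0) = 2A`, its `g`-length
is at most its length in the constant metric `dx² + dy² + (1 + 2A) dz²`, whose square is
`(b² + (1 + 2A) a²) ε² ≤ ε²`. The inequality of lengths is strict: the second coordinate varies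
along the segment, so it takes an irrational value, and `f` attains its maximum only at even
integers.
-/

open AffineMap (lineMap)

@[fun_prop]
theorem continuous_f (A : ℝ) : Continuous (f A) := by
  unfold f
  fun_prop

theorem f_nonneg {A : ℝ} (hA : 0 ≤ A) (y : ℝ) : 0 ≤ f A y :=
  mul_nonneg hA (by linarith [neg_one_le_cos (π * y)])

theorem f_le_two_mul {A : ℝ} (hA : 0 ≤ A) (y : ℝ) : f A y ≤ 2 * A := by
  unfold f
  nlinarith [cos_le_one (π * y)]

theorem cos_pi_mul_ne_one_of_irrational {y : ℝ} (hy : Irrational y) : cos (π * y) ≠ 1 := by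
  rw [Ne, cos_eq_one_iff]
  rintro ⟨n, hn⟩
  refine hy.ne_int (2 * n) ?_
  push_cast
  exact mul_left_cancel₀ pi_ne_zero (by linarith)

theorem f_lt_two_mul_of_irrational {A y : ℝ} (hA : 0 < A) (hy : Irrational y) :
    f A y < 2 * A := by
  have hcos : cos (π * y) < 1 := (cos_le_one _).lt_of_ne (cos_pi_mul_ne_one_of_irrational hy)
  unfold f
  nlinarith

theorem exists_irrational_lineMap {x y : ℝ} (hxy : x ≠ y) :
    ∃ t ∈ Set.Icc (0 : ℝ) 1, Irrational (lineMap x y t) := by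
  obtain ⟨z, hz, hmin, hmax⟩ := exists_irrational_btwn (min_lt_max.2 hxy)
  have hz_mem : z ∈ segment ℝ x y := segment_eq_uIcc x y ▸ ⟨hmin.le, hmax.le⟩
  rw [segment_eq_image_lineMap] at hz_mem
  obtain ⟨t, ht, rfl⟩ := hz_mem
  exact ⟨t, ht, hz⟩

theorem Lg_nonneg (A : ℝ) (γ : ℝ → E3) : 0 ≤ Lg A γ :=
  intervalIntegral.integral_nonneg zero_le_one fun _ _ => sqrt_nonneg _

theorem dg_le_Lg (A : ℝ) {γ : ℝ → E3} (hγ : ContDiff ℝ 1 γ) : dg A (γ 0) (γ 1) ≤ Lg A γ := by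
  refine csInf_le ⟨0, ?_⟩ ⟨γ, hγ, rfl, rfl, rfl⟩
  rintro _ ⟨δ, -, -, -, rfl⟩
  exact Lg_nonneg A δ

theorem dg_le_Lg_lineMap (A : ℝ) (p q : E3) : dg A p q ≤ Lg A (lineMap p q) := by
  simpa only [AffineMap.lineMap_apply_zero, AffineMap.lineMap_apply_one]
    using dg_le_Lg A (AffineMap.contDiff_lineMap p q)

theorem Lg_lineMap (A : ℝ) (p q : E3) :
    Lg A (lineMap p q) = ∫ t in (0 : ℝ)..1,
      √((q 0 - p 0) ^ 2 + (q 1 - p 1) ^ 2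
        + (1 + f A (lineMap (p 1) (q 1) t)) * (q 2 - p 2) ^ 2) := by
  have hcoord (t : ℝ) : lineMap p q t 1 = lineMap (p 1) (q 1) t := by
    simp [AffineMap.lineMap_apply]
  have hderiv (t : ℝ) : deriv (lineMap p q) t = q - p := AffineMap.hasDerivAt_lineMap.deriv
  simp only [Lg, hcoord, hderiv, PiLp.sub_apply]

theorem Lg_lineMap_lt_sqrt {A : ℝ} (hA : 0 < A) {p q : E3} (h1 : p 1 ≠ q 1) (h2 : p 2 ≠ q 2) :
    Lg A (lineMap p q)
      < √((q 0 - p 0) ^ 2 + (q 1 - p 1) ^ 2 + (1 + 2 * A) * (q 2 - p 2) ^ 2) := by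
  have : 0 < (q 2 - p 2) ^ 2 := sq_pos_of_ne_zero (sub_ne_zero.2 h2.symm)
  obtain ⟨s, hs, hs_irrational⟩ := exists_irrational_lineMap h1
  calc Lg A (lineMap p q)
      = ∫ t in (0 : ℝ)..1, √((q 0 - p 0) ^ 2 + (q 1 - p 1) ^ 2
          + (1 + f A (lineMap (p 1) (q 1) t)) * (q 2 - p 2) ^ 2) := Lg_lineMap A p q
    _ < ∫ _ in (0 : ℝ)..1,
          √((q 0 - p 0) ^ 2 + (q 1 - p 1) ^ 2 + (1 + 2 * A) * (q 2 - p 2) ^ 2) := by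
      apply intervalIntegral.integral_lt_integral_of_continuousOn_of_le_of_exists_lt one_pos
      · simp only [AffineMap.lineMap_apply_module]
        fun_prop
      · exact continuousOn_const
      · intro t _
        gcongr
        exact f_le_two_mul hA.le _
      · refine ⟨s, hs, ?_⟩
        have := f_nonneg hA.le (lineMap (p 1) (q 1) s)
        gcongr
        exact f_lt_two_mul_of_irrational hA hs_irrational
    _ = √((q 0 - p 0) ^ 2 + (q 1 - p 1) ^ 2 + (1 + 2 * A) * (q 2 - p 2) ^ 2) := by
      rw [intervalIntegral.integral_const, sub_zero, one_smul]

theorem dg_lt_sqrt {A : ℝ} (hA : 0 < A) {p q : E3} (h1 : p 1 ≠ q 1) (h2 : p 2 ≠ q 2) :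
    dg A p q < √((q 0 - p 0) ^ 2 + (q 1 - p 1) ^ 2 + (1 + 2 * A) * (q 2 - p 2) ^ 2) :=
  (dg_le_Lg_lineMap A p q).trans_lt (Lg_lineMap_lt_sqrt hA h1 h2)

theorem a_sq : a ^ 2 = 1 / 2 := by
  rw [a, div_pow, one_pow, sq_sqrt zero_le_two]

theorem a_pos : 0 < a := by
  unfold a
  positivity

theorem circumradius_lt_eps_general {A ε b : ℝ} (hA : 0 < A) (hε : 0 < ε) (hb : b ≠ 0)
    (hAb : A + b ^ 2 ≤ 1 / 2) :
    dg A (pt 0 0 (a * ε)) (pt 0 (b * ε) 0) < ε := by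
  have hlt : dg A (pt 0 0 (a * ε)) (pt 0 (b * ε) 0)
      < √((b * ε) ^ 2 + (1 + 2 * A) * (a * ε) ^ 2) := by
    simpa [pt] using dg_lt_sqrt hA (p := pt 0 0 (a * ε)) (q := pt 0 (b * ε) 0)
      (by simp [pt, hb, hε.ne']) (by simp [pt, a_pos.ne', hε.ne'])
  refine hlt.trans_le (sqrt_le_iff.2 ⟨hε.le, ?_⟩)
  calc (b * ε) ^ 2 + (1 + 2 * A) * (a * ε) ^ 2
      = (A + b ^ 2 + 1 / 2) * ε ^ 2 := by rw [mul_pow, mul_pow, a_sq]; ring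
    _ ≤ 1 * ε ^ 2 := by gcongr; linarith
    _ = ε ^ 2 := one_mul _

/-- For `0 < b ≤ a/2`, the circumradius is smaller than the sampling
parameter: `d_g(u, c) < ε`. -/
theorem circumradius_lt_eps (A : ℝ) (hA0 : 0 < A) (hA : A ≤ 3 / 8)
    (ε b : ℝ) (hε0 : 0 < ε) (hε1 : ε ≤ 1) (hb : 0 < b) (hba : b ≤ a / 2) :
    dg A (pt 0 0 (a * ε)) (pt 0 (b * ε) 0) < ε := by
  have hb_sq : b ^ 2 ≤ 1 / 8 := by nlinarith [a_sq]
  exact circumradius_lt_eps_general hA0 hε0 hb.ne' (by linarith)
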